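/- arXiv:2511.04626 — 3 statements merged into one kernel-verified Lean document; each statement's English description precedes it below -/
import Mathlib

section
/- Let P be a real symmetric positive definite n×n matrix, r > 0, a ∈ ℝⁿ, b ∈ ℝ, and x̄ ∈ ℝⁿ with aᵀx̄ ≤ b. If the symmetric (1+n)×(1+n) block matrix [[(b − aᵀx̄)²·r, (Pa)ᵀ], [Pa, P]] is positive semidefinite, then every η ∈ ℝⁿ with ηᵀ P⁻¹ η ≤ 1/r satisfies aᵀ(x̄ + η) ≤ b; that is, the ellipsoid {x̄ + η : ηᵀ P⁻¹ η ≤ 1/r} is contained in the half-space {x : aᵀx ≤ b}. -/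
/-!
Write `d = b - aᵀx̄ ≥ 0`. Testing the block matrix on the vector `(1, -a)` gives `aᵀPa ≤ d²r`.
For `η` in the ellipsoid, the Cauchy–Schwarz inequality for the inner product defined by `P`,
applied to `a` and `P⁻¹η`, then yields `(aᵀη)² ≤ (aᵀPa)(ηᵀP⁻¹η) ≤ d²`, hence `aᵀη ≤ d`. The
Cauchy–Schwarz step is carried out by expanding `(ζ - s a)ᵀP(ζ - s a) ≥ 0` with `ζ = P⁻¹η`
at a suitable `s`.
-/

open Matrix

/-- Ellipsoid-in-half-space inclusion from the Schur-complement LMI: if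
`[[(b − aᵀx̄)²·r, (Pa)ᵀ], [Pa, P]]` is positive semidefinite, then the ellipsoid
`{x̄ + η : ηᵀP⁻¹η ≤ 1/r}` is contained in the half-space `{x : aᵀx ≤ b}`. -/
theorem stmt3 {n : ℕ} (P : Matrix (Fin n) (Fin n) ℝ) (hP : P.PosDef)
    (r : ℝ) (hr : 0 < r) (a : Fin n → ℝ) (b : ℝ) (xbar : Fin n → ℝ)
    (hxbar : a ⬝ᵥ xbar ≤ b)
    (hLMI : (fromBlocks
        (Matrix.of fun (_ : Fin 1) (_ : Fin 1) => (b - a ⬝ᵥ xbar) ^ 2 * r)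
        (Matrix.of fun (_ : Fin 1) (j : Fin n) => (P *ᵥ a) j)
        (Matrix.of fun (i : Fin n) (_ : Fin 1) => (P *ᵥ a) i)
        P).PosSemidef) :
    ∀ η : Fin n → ℝ, η ⬝ᵥ (P⁻¹ *ᵥ η) ≤ 1 / r → a ⬝ᵥ (xbar + η) ≤ b := by
  intro η hη
  have hdot (x y : Fin n → ℝ) : x ⬝ᵥ (P *ᵥ y) = y ⬝ᵥ (P *ᵥ x) := by
    have hT : Pᵀ = P := by simpa using hP.isHermitian.eq
    rw [dotProduct_mulVec, ← mulVec_transpose, hT, dotProduct_comm]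
  have haPa : a ⬝ᵥ (P *ᵥ a) ≤ (b - a ⬝ᵥ xbar) ^ 2 * r := by
    have h := hLMI.dotProduct_mulVec_nonneg (Sum.elim (fun _ => 1) (-a))
    have h1 : (Matrix.of fun (_ : Fin 1) (j : Fin n) => (P *ᵥ a) j) *ᵥ (-a)
        = fun _ => -(a ⬝ᵥ (P *ᵥ a)) := by
      funext i
      simp [mulVec, dotProduct, mul_comm]
    have h2 : (Matrix.of fun (i : Fin n) (_ : Fin 1) => (P *ᵥ a) i) *ᵥ (fun _ => (1 : ℝ))
        = P *ᵥ a := by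
      funext i
      simp [mulVec, dotProduct]
    have h3 : (Matrix.of fun (_ : Fin 1) (_ : Fin 1) => (b - a ⬝ᵥ xbar) ^ 2 * r) *ᵥ
        (fun _ => (1 : ℝ)) = fun _ => (b - a ⬝ᵥ xbar) ^ 2 * r := by
      funext i
      simp [mulVec, dotProduct]
    rw [fromBlocks_mulVec, star_trivial, Sum.elim_comp_inl, Sum.elim_comp_inr, h1, h2, h3,
      sumElim_dotProduct_sumElim, mulVec_neg, add_neg_cancel, dotProduct_zero, add_zero] at h
    simp only [dotProduct, Finset.univ_unique, Finset.sum_singleton, Pi.add_apply, one_mul] at h ⊢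
    linarith
  have hη' : P *ᵥ (P⁻¹ *ᵥ η) = η := by
    rw [mulVec_mulVec, mul_nonsing_inv _ ((isUnit_iff_isUnit_det P).mp hP.isUnit), one_mulVec]
  generalize P⁻¹ *ᵥ η = ζ at hη hη'
  rw [dotProduct_add]
  by_contra! hlt
  set d := b - a ⬝ᵥ xbar with hd
  have hd0 : 0 ≤ d := by linarith
  have hdx : d < a ⬝ᵥ η := by linarith
  have hx : 0 < a ⬝ᵥ η := hd0.trans_lt hdx
  have hquad (s : ℝ) : 0 ≤ η ⬝ᵥ ζ - 2 * s * (a ⬝ᵥ η) + s ^ 2 * (a ⬝ᵥ (P *ᵥ a)) := by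
    have h := hP.posSemidef.dotProduct_mulVec_nonneg (ζ - s • a)
    have e := hdot ζ a
    rw [hη'] at e
    rw [star_trivial, mulVec_sub, mulVec_smul, hη', sub_dotProduct, dotProduct_sub,
      dotProduct_sub, smul_dotProduct, smul_dotProduct, dotProduct_smul, dotProduct_smul, e,
      dotProduct_comm ζ η] at h
    simp only [smul_eq_mul] at h
    linarith
  -- This `s` makes the linear term equal to `-2 / r`, so the inequality reduces to
  -- `(aᵀη)² ≤ d²`, including when `d = 0`.
  have h := hquad (1 / (r * (a ⬝ᵥ η)))
  generalize a ⬝ᵥ η = x at *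
  have hmul := mul_le_mul_of_nonneg_left haPa (sq_nonneg (1 / (r * x)))
  have e1 : 2 * (1 / (r * x)) * x = 2 / r := by field_simp
  have e2 : (1 / (r * x)) ^ 2 * (d ^ 2 * r) = (d / x) ^ 2 / r := by field_simp
  have hlt1 : (d / x) ^ 2 < 1 := by
    rw [sq_lt_one_iff₀ (by positivity)]
    exact (div_lt_one hx).mpr hdx
  have h3 : (d / x) ^ 2 / r < 1 / r := div_lt_div_of_pos_right hlt1 hr
  have e3 : 2 / r = 1 / r + 1 / r := by ring
  linarith
end

section
/- Let M be a real m×n matrix and ρ ≥ 0. Then the image of the Euclidean ball of radius ρ in ℝⁿ under M equals the image of the Euclidean ball of radius ρ in ℝᵐ under the positive semidefinite square root of M Mᵀ; that is, {Mz : z ∈ ℝⁿ, |z| ≤ ρ} = {(M Mᵀ)^{1/2} ζ : ζ ∈ ℝᵐ, |ζ| ≤ ρ}. -/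
/-!
If `A Aᵀ = B Bᵀ`, then `A` and `B` have the same image of each Euclidean ball; the theorem is the
case `A = M`, `B = S`, as `S Sᵀ = S² = M Mᵀ`. To see the inclusion, take `z` in the ball. Since
`A Aᵀ` and `A` have the same range, there is `y` with `A Aᵀ y = A z`; then `Aᵀ y` is the
orthogonal projection of `z` onto the range of `Aᵀ`, so it is no longer than `z`. The vector
`Bᵀ y` satisfies `B Bᵀ y = A Aᵀ y = A z`, and it has the same length as `Aᵀ y` because both squared
lengths equal `y · A Aᵀ y`.
-/

open Matrix

/-- The normal equation `A Aᵀ y = A z` is always solvable, because `A Aᵀ` and `A` have the same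
rank. -/
lemma exists_mulVec_transpose_eq {m n : ℕ} (A : Matrix (Fin m) (Fin n) ℝ) (z : Fin n → ℝ) :
    ∃ y : Fin m → ℝ, A *ᵥ (Aᵀ *ᵥ y) = A *ᵥ z := by
  have hle : LinearMap.range (A * Aᵀ).mulVecLin ≤ LinearMap.range A.mulVecLin := by
    rw [Matrix.mulVecLin_mul]
    exact LinearMap.range_comp_le_range _ _
  have heq := Submodule.eq_of_le_of_finrank_eq hle (Matrix.rank_self_mul_transpose A)
  have hz : A *ᵥ z ∈ LinearMap.range (A * Aᵀ).mulVecLin := by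
    rw [heq]
    exact ⟨z, rfl⟩
  obtain ⟨y, hy⟩ := hz
  exact ⟨y, by rw [Matrix.mulVec_mulVec]; exact hy⟩

lemma transpose_mulVec_dotProduct {m n : ℕ} (A : Matrix (Fin m) (Fin n) ℝ) (y : Fin m → ℝ)
    (v : Fin n → ℝ) : (Aᵀ *ᵥ y) ⬝ᵥ v = y ⬝ᵥ (A *ᵥ v) := by
  rw [Matrix.mulVec_transpose, Matrix.dotProduct_mulVec]

/-- Each value of `A` is a value of `B` at a vector that is no longer. -/
lemma exists_mulVec_eq_of_gram_eq {m n k : ℕ} (A : Matrix (Fin m) (Fin n) ℝ)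
    (B : Matrix (Fin m) (Fin k) ℝ) (h : A * Aᵀ = B * Bᵀ) (z : Fin n → ℝ) :
    ∃ ζ : Fin k → ℝ, ζ ⬝ᵥ ζ ≤ z ⬝ᵥ z ∧ A *ᵥ z = B *ᵥ ζ := by
  obtain ⟨y, hy⟩ := exists_mulVec_transpose_eq A z
  have hB : B *ᵥ (Bᵀ *ᵥ y) = A *ᵥ z := by
    rw [← hy, Matrix.mulVec_mulVec, Matrix.mulVec_mulVec, h]
  refine ⟨Bᵀ *ᵥ y, ?_, hB.symm⟩
  have h1 : (Bᵀ *ᵥ y) ⬝ᵥ (Bᵀ *ᵥ y) = (Aᵀ *ᵥ y) ⬝ᵥ (Aᵀ *ᵥ y) := by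
    rw [transpose_mulVec_dotProduct, transpose_mulVec_dotProduct, hB, hy]
  have h2 : (Aᵀ *ᵥ y) ⬝ᵥ z = (Aᵀ *ᵥ y) ⬝ᵥ (Aᵀ *ᵥ y) := by
    rw [transpose_mulVec_dotProduct, transpose_mulVec_dotProduct, hy]
  -- Pythagoras: `z - Aᵀ y` is orthogonal to `Aᵀ y`.
  have h3 : 0 ≤ (z - Aᵀ *ᵥ y) ⬝ᵥ (z - Aᵀ *ᵥ y) :=
    Finset.sum_nonneg fun i _ => mul_self_nonneg _
  rw [sub_dotProduct, dotProduct_sub, dotProduct_sub, dotProduct_comm z (Aᵀ *ᵥ y)] at h3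
  linarith

/-- The image of the Euclidean ball of radius `ρ` in `ℝⁿ` under `M` equals the image of the
Euclidean ball of radius `ρ` in `ℝᵐ` under the positive semidefinite square root `S` of `M Mᵀ`. -/
theorem stmt4 {m n : ℕ} (M : Matrix (Fin m) (Fin n) ℝ) (ρ : ℝ) (hρ : 0 ≤ ρ)
    (S : Matrix (Fin m) (Fin m) ℝ) (hS : S.PosSemidef) (hSsq : S * S = M * Mᵀ) :
    {w : Fin m → ℝ | ∃ z : Fin n → ℝ, Real.sqrt (z ⬝ᵥ z) ≤ ρ ∧ w = M *ᵥ z} =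
      {w : Fin m → ℝ | ∃ ζ : Fin m → ℝ, Real.sqrt (ζ ⬝ᵥ ζ) ≤ ρ ∧ w = S *ᵥ ζ} := by
  have hT : Sᵀ = S := by
    have := hS.isHermitian.eq
    rwa [Matrix.conjTranspose_eq_transpose_of_trivial] at this
  have hG : M * Mᵀ = S * Sᵀ := by rw [hT, hSsq]
  ext w
  constructor
  · rintro ⟨z, hz, rfl⟩
    obtain ⟨ζ, hle, he⟩ := exists_mulVec_eq_of_gram_eq M S hG z
    exact ⟨ζ, (Real.sqrt_le_sqrt hle).trans hz, he⟩
  · rintro ⟨z, hz, rfl⟩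
    obtain ⟨ζ, hle, he⟩ := exists_mulVec_eq_of_gram_eq S M hG.symm z
    exact ⟨ζ, (Real.sqrt_le_sqrt hle).trans hz, he⟩
end

section
/- Let P be a real symmetric positive definite n×n matrix, K a real m×n matrix, r > 0, a ∈ ℝᵐ, b ∈ ℝ, and ū ∈ ℝᵐ with aᵀū ≤ b. If the symmetric (1+n)×(1+n) block matrix [[(b − aᵀū)²·r, aᵀKP], [(KP)ᵀa, P]] is positive semidefinite, then every η ∈ ℝⁿ with ηᵀ P⁻¹ η ≤ 1/r satisfies aᵀ(ū + Kη) ≤ b; that is, the input ellipsoid {ū + Kη : ηᵀ P⁻¹ η ≤ 1/r} is contained in the half-space {u : aᵀu ≤ b}. -/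
/-!
Write `η = P w` and `c = aᵀKη`. Evaluating the quadratic form of the block matrix at
`(1, -(r c) w)` gives `0 ≤ (b - aᵀū)² r - 2 r c² + (r c)² wᵀPw`. Since `wᵀPw = ηᵀP⁻¹η ≤ 1 / r`,
this yields `c² ≤ (b - aᵀū)²`, and `b - aᵀū ≥ 0` turns this into `c ≤ b - aᵀū`.
-/

open Matrix

/-- Input-ellipsoid-in-half-space inclusion from the Schur-complement LMI: if
`[[(b − aᵀū)²·r, aᵀKP], [(KP)ᵀa, P]]` is positive semidefinite, then the input ellipsoid
`{ū + Kη : ηᵀP⁻¹η ≤ 1/r}` is contained in the half-space `{u : aᵀu ≤ b}`. -/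
theorem stmt5 {n m : ℕ} (P : Matrix (Fin n) (Fin n) ℝ) (hP : P.PosDef)
    (K : Matrix (Fin m) (Fin n) ℝ)
    (r : ℝ) (hr : 0 < r) (a : Fin m → ℝ) (b : ℝ) (ubar : Fin m → ℝ)
    (hubar : a ⬝ᵥ ubar ≤ b)
    (hLMI : (fromBlocks
        (Matrix.of fun (_ : Fin 1) (_ : Fin 1) => (b - a ⬝ᵥ ubar) ^ 2 * r)
        (Matrix.of fun (_ : Fin 1) (j : Fin n) => (a ᵥ* (K * P)) j)
        (Matrix.of fun (i : Fin n) (_ : Fin 1) => ((K * P)ᵀ *ᵥ a) i)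
        P).PosSemidef) :
    ∀ η : Fin n → ℝ, η ⬝ᵥ (P⁻¹ *ᵥ η) ≤ 1 / r → a ⬝ᵥ (ubar + K *ᵥ η) ≤ b := by
  intro η hη
  obtain ⟨w, rfl⟩ : ∃ w, η = P *ᵥ w :=
    ⟨P⁻¹ *ᵥ η, by rw [mulVec_mulVec, mul_nonsing_inv _ hP.det_pos.ne'.isUnit, one_mulVec]⟩
  rw [mulVec_mulVec, nonsing_inv_mul _ hP.det_pos.ne'.isUnit, one_mulVec, dotProduct_comm] at hη
  rw [dotProduct_add, mulVec_mulVec]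
  set c := a ⬝ᵥ ((K * P) *ᵥ w) with hc
  -- The coefficient `r * c` gives the strongest scalar inequality and is valid even if `b = aᵀū`.
  have h := hLMI.dotProduct_mulVec_nonneg (Sum.elim (fun _ => 1) (-(r * c) • w))
  have h1 : (fun j => (a ᵥ* (K * P)) j) ⬝ᵥ w = c := (dotProduct_mulVec a (K * P) w).symm
  have h2 : w ⬝ᵥ (fun j => ((K * P)ᵀ *ᵥ a) j) = c := by
    rw [← h1, dotProduct_comm, mulVec_transpose]
  have hform : 0 ≤ (b - a ⬝ᵥ ubar) ^ 2 * r - 2 * (r * c) * c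
      + (r * c) ^ 2 * (w ⬝ᵥ (P *ᵥ w)) := by
    have e1 : (Matrix.of fun (_ : Fin 1) (j : Fin n) => (a ᵥ* (K * P)) j) *ᵥ w
        = fun _ => c := by
      funext i
      exact h1
    have e2 : (Matrix.of fun (i : Fin n) (_ : Fin 1) => ((K * P)ᵀ *ᵥ a) i) *ᵥ (fun _ => (1 : ℝ))
        = fun j => ((K * P)ᵀ *ᵥ a) j := by
      funext i
      simp [mulVec, dotProduct]
    have e3 : (Matrix.of fun (_ : Fin 1) (_ : Fin 1) => (b - a ⬝ᵥ ubar) ^ 2 * r) *ᵥ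
        (fun _ => (1 : ℝ)) = fun _ => (b - a ⬝ᵥ ubar) ^ 2 * r := by
      funext i
      simp [mulVec, dotProduct]
    rw [star_trivial, fromBlocks_mulVec, sumElim_dotProduct_sumElim, Sum.elim_comp_inl,
      Sum.elim_comp_inr, mulVec_smul, mulVec_smul, e1, e2, e3, dotProduct_add,
      smul_dotProduct, dotProduct_add w, dotProduct_smul, dotProduct_smul, h2] at h
    simp only [dotProduct, Finset.univ_unique, Finset.sum_singleton,
      smul_eq_mul, one_mul] at h ⊢
    linarith
  have hq : (r * c) ^ 2 * (w ⬝ᵥ (P *ᵥ w)) ≤ r * c ^ 2 := by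
    calc (r * c) ^ 2 * (w ⬝ᵥ (P *ᵥ w)) ≤ (r * c) ^ 2 * (1 / r) := by
          gcongr
      _ = r * c ^ 2 := by field_simp
  have hsq : c ^ 2 ≤ (b - a ⬝ᵥ ubar) ^ 2 := by
    refine le_of_mul_le_mul_left ?_ hr
    linarith
  have := abs_le_of_sq_le_sq hsq (sub_nonneg.mpr hubar)
  linarith [le_abs_self c]
end
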